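/- Under the data model, consider gradient descent β(0) = 0, β(t+1) = β(t) − (η/n)Xᵀ(Xβ(t) − y) with η > 0 and (η/n)‖XᵀX‖ ≤ 1 (ℓ2 operator norm). Let K > k ≥ 0, and let x_i = v_1 + v_s + ξ_i be an example whose spurious feature satisfies n_{1,s} − n_{−1,s} ≥ K − k (majority group of class 1), and x_j = v_1 + v_{s'} + ξ_j an example whose spurious feature satisfies n_{1,s'} − n_{−1,s'} ≤ −(K − k) (minority group of class 1 whose spurious feature is majority in class −1). Then for every natural number t, ⟨x_i, β(t)⟩ − ⟨x_j, β(t)⟩ ≥ (ηt/n)[(K − k)(‖v_s‖² + ‖v_{s'}‖²) + ⟨v_s − v_{s'}, ∑_k y_k ξ_k⟩ + ⟨ξ_i − ξ_j, Xᵀy⟩] − (‖x_i‖ + ‖x_j‖) · (η/n)² · ‖XᵀX‖ · ‖Xᵀy‖ · t(t−1)/2. That is, the network-output gap between majority and minority examples grows linearly in t with margin at least (K − k)(‖v_s‖² + ‖v_{s'}‖²) per step, up to noise terms and a quadratically small error. -/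

import Mathlib

/-!
Write `T` for the design operator, `M = T† T` and `b = T† y`, so that one gradient step with
rate `a = η / n` is `β ↦ (1 - a M) β + a b`. Since `‖M w‖² ≤ ‖M‖ ⟪w, M w⟫` and `a ‖M‖ ≤ 1`, the
map `1 - a M` is nonexpansive (`norm_sub_smul_adjoint_le`). Hence `‖β t‖ ≤ a t ‖b‖`
(`norm_gd_le`), and summing the deviations `a M (β t)` gives
`‖β t - a t b‖ ≤ a² ‖M‖ ‖b‖ t (t - 1) / 2` (`norm_gd_sub_linear_le`).

It remains to evaluate the linear part `⟪x i₀ - x j₀, b⟫` with `b = ∑ i, y i • x i`. The core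
features cancel in `x i₀ - x j₀`, and by orthogonality the inner product of a spurious feature `u`
with `b` is `(n_{1,u} - n_{-1,u}) ‖u‖²` plus a noise term (`inner_spurious_sum`).
-/

open Matrix
open scoped Classical
open scoped RealInnerProductSpace

section GradientDescent

variable {E F : Type*} [NormedAddCommGroup E] [InnerProductSpace ℝ E] [CompleteSpace E]
  [NormedAddCommGroup F] [InnerProductSpace ℝ F] [CompleteSpace F]

/-- A gradient step for the homogeneous least-squares problem is nonexpansive when the step size
is at most `1 / ‖T† T‖`. -/
lemma norm_sub_smul_adjoint_le (T : E →L[ℝ] F) {a : ℝ} (ha : 0 ≤ a)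
    (hstep : a * ‖(ContinuousLinearMap.adjoint T).comp T‖ ≤ 1) (u : E) :
    ‖u - a • ContinuousLinearMap.adjoint T (T u)‖ ≤ ‖u‖ := by
  rw [ContinuousLinearMap.norm_adjoint_comp_self] at hstep
  have hadj : ‖ContinuousLinearMap.adjoint T (T u)‖ ≤ ‖T‖ * ‖T u‖ := by
    simpa using (ContinuousLinearMap.adjoint T).le_opNorm (T u)
  have hsq : ‖ContinuousLinearMap.adjoint T (T u)‖ ^ 2 ≤ (‖T‖ * ‖T u‖) ^ 2 :=
    pow_le_pow_left₀ (norm_nonneg _) hadj 2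
  have hinner : ⟪u, ContinuousLinearMap.adjoint T (T u)⟫ = ‖T u‖ ^ 2 := by
    rw [ContinuousLinearMap.adjoint_inner_right, real_inner_self_eq_norm_sq]
  refine (sq_le_sq₀ (norm_nonneg _) (norm_nonneg _)).mp ?_
  rw [norm_sub_sq_real, inner_smul_right, hinner, norm_smul, mul_pow, Real.norm_eq_abs, sq_abs]
  have h1 : a ^ 2 * ‖ContinuousLinearMap.adjoint T (T u)‖ ^ 2 ≤ a ^ 2 * (‖T‖ * ‖T u‖) ^ 2 :=
    mul_le_mul_of_nonneg_left hsq (sq_nonneg a)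
  have h2 : 0 ≤ a * ‖T u‖ ^ 2 := by positivity
  have h3 : a * ‖T u‖ ^ 2 * (a * (‖T‖ * ‖T‖)) ≤ a * ‖T u‖ ^ 2 * 1 :=
    mul_le_mul_of_nonneg_left hstep h2
  nlinarith

variable {T : E →L[ℝ] F} {a : ℝ} {b : E} {β : ℕ → E}

lemma norm_gd_le (ha : 0 ≤ a) (hstep : a * ‖(ContinuousLinearMap.adjoint T).comp T‖ ≤ 1)
    (h0 : β 0 = 0)
    (hrec : ∀ t, β (t + 1) = (β t - a • ContinuousLinearMap.adjoint T (T (β t))) + a • b)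
    (t : ℕ) : ‖β t‖ ≤ a * t * ‖b‖ := by
  induction t with
  | zero => simp [h0]
  | succ t ih =>
    rw [hrec]
    refine (norm_add_le _ _).trans ?_
    have h := norm_sub_smul_adjoint_le T ha hstep (β t)
    rw [norm_smul, Real.norm_of_nonneg ha]
    push_cast
    linarith

/-- Early in training gradient descent stays close to the straight line `t ↦ a t b`. -/
lemma norm_gd_sub_linear_le (ha : 0 ≤ a)
    (hstep : a * ‖(ContinuousLinearMap.adjoint T).comp T‖ ≤ 1) (h0 : β 0 = 0)
    (hrec : ∀ t, β (t + 1) = (β t - a • ContinuousLinearMap.adjoint T (T (β t))) + a • b)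
    (t : ℕ) :
    ‖β t - (a * t) • b‖ ≤
      a ^ 2 * ‖(ContinuousLinearMap.adjoint T).comp T‖ * ‖b‖ * (t * (t - 1) / 2) := by
  induction t with
  | zero => simp [h0]
  | succ t ih =>
    have hsplit : β (t + 1) - (a * ((t + 1 : ℕ) : ℝ)) • b =
        (β t - (a * t) • b) - a • (ContinuousLinearMap.adjoint T).comp T (β t) := by
      rw [hrec]
      rw [ContinuousLinearMap.comp_apply, Nat.cast_succ]
      module
    rw [hsplit]
    refine (norm_sub_le _ _).trans ?_
    rw [norm_smul, Real.norm_of_nonneg ha]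
    have h1 := ((ContinuousLinearMap.adjoint T).comp T).le_opNorm (β t)
    have h2 : ‖(ContinuousLinearMap.adjoint T).comp T (β t)‖ ≤
        ‖(ContinuousLinearMap.adjoint T).comp T‖ * (a * t * ‖b‖) :=
      h1.trans (mul_le_mul_of_nonneg_left (norm_gd_le ha hstep h0 hrec t) (norm_nonneg _))
    have h3 := mul_le_mul_of_nonneg_left h2 ha
    rw [Nat.cast_succ]
    linarith

end GradientDescent

/-- Against the label-weighted sum of the examples, a spurious feature `u` only sees its own
class imbalance and the noise. -/
lemma inner_spurious_sum {d n : ℕ} {x ξ s : Fin n → EuclideanSpace ℝ (Fin d)}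
    {y : Fin n → ℝ} (hy : ∀ i, y i = 1 ∨ y i = -1)
    {v : ℝ → EuclideanSpace ℝ (Fin d)} {A : Finset (EuclideanSpace ℝ (Fin d))}
    (hs : ∀ i, s i ∈ A)
    (hx : ∀ i, x i = v (y i) + s i + ξ i)
    (horth_cs : ∀ c : ℝ, c = 1 ∨ c = -1 → ∀ u ∈ A, ⟪v c, u⟫ = 0)
    (horth_ss : ∀ u ∈ A, ∀ w ∈ A, u ≠ w → ⟪u, w⟫ = 0)
    {u : EuclideanSpace ℝ (Fin d)} (hu : u ∈ A) :
    ⟪u, ∑ i, y i • x i⟫ =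
      (((Finset.univ.filter fun i => y i = 1 ∧ s i = u).card : ℝ) -
        ((Finset.univ.filter fun i => y i = -1 ∧ s i = u).card : ℝ)) * ‖u‖ ^ 2 +
      ⟪u, ∑ i, y i • ξ i⟫ := by
  rw [Finset.card_filter, Finset.card_filter]
  push_cast
  rw [← Finset.sum_sub_distrib, Finset.sum_mul, inner_sum, inner_sum, ← Finset.sum_add_distrib]
  refine Finset.sum_congr rfl fun i _ => ?_
  have hcore : ⟪u, v (y i)⟫ = 0 := by
    rw [real_inner_comm]; exact horth_cs _ (hy i) u hu
  rw [hx, inner_smul_right, inner_smul_right, inner_add_right, inner_add_right, hcore]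
  by_cases hsu : s i = u
  · rw [hsu, real_inner_self_eq_norm_sq]
    rcases hy i with h | h <;> (rw [h]; norm_num; try ring)
  · rw [horth_ss u hu _ (hs i) (Ne.symm hsu)]
    simp [hsu]

/-- Data model: `n` examples `x i = v (y i) + s i + ξ i` in `ℝ^d` with labels
`y i ∈ {1, −1}`, core features `v 1, v (−1)`, spurious features from a finite orthogonal
set `A`, and `X` the matrix with rows `x i`.  Gradient descent `β(0) = 0`,
`β(t+1) = β(t) − (η/n)Xᵀ(Xβ(t) − y)` with `η > 0` and `(η/n)‖XᵀX‖ ≤ 1` (ℓ2 operator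
norm).  Let `K > k ≥ 0` and let `x i₀ = v 1 + vs + ξ i₀` be an example whose spurious
feature satisfies `n_{1,s} − n_{−1,s} ≥ K − k` (majority group of class 1), and
`x j₀ = v 1 + vs' + ξ j₀` one whose spurious feature satisfies
`n_{1,s'} − n_{−1,s'} ≤ −(K − k)` (minority of class 1, majority of class −1).  Then for
every `t`, the output gap `⟪x i₀, β t⟫ − ⟪x j₀, β t⟫` is at least
`(ηt/n)[(K − k)(‖vs‖² + ‖vs'‖²) + ⟪vs − vs', ∑ k, y k • ξ k⟫ + ⟪ξ i₀ − ξ j₀, Xᵀy⟫]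
  − (‖x i₀‖ + ‖x j₀‖)(η/n)²‖XᵀX‖‖Xᵀy‖t(t−1)/2`. -/
theorem stmt_11 (d n : ℕ)
    (x ξ s : Fin n → EuclideanSpace ℝ (Fin d))
    (y : Fin n → ℝ) (hy : ∀ i, y i = 1 ∨ y i = -1)
    (v : ℝ → EuclideanSpace ℝ (Fin d))
    (A : Finset (EuclideanSpace ℝ (Fin d))) (hs : ∀ i, s i ∈ A)
    (hx : ∀ i, x i = v (y i) + s i + ξ i)
    (horth_core : ⟪v 1, v (-1)⟫ = 0)
    (horth_cs : ∀ c : ℝ, c = 1 ∨ c = -1 → ∀ u ∈ A, ⟪v c, u⟫ = 0)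
    (horth_ss : ∀ u ∈ A, ∀ w ∈ A, u ≠ w → ⟪u, w⟫ = 0)
    (X : Matrix (Fin n) (Fin d) ℝ)
    (hX : X = Matrix.of fun i => (WithLp.equiv 2 (Fin d → ℝ)) (x i))
    (yE : EuclideanSpace ℝ (Fin n))
    (hyE : yE = (WithLp.equiv 2 (Fin n → ℝ)).symm y)
    (η : ℝ) (hη : 0 < η)
    (hstep : (η / n) * ‖toEuclideanCLM (𝕜 := ℝ) (Xᵀ * X)‖ ≤ 1)
    (β : ℕ → EuclideanSpace ℝ (Fin d)) (h0 : β 0 = 0)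
    (hrec : ∀ t : ℕ,
      β (t + 1) = β t - (η / n) • toEuclideanLin Xᵀ (toEuclideanLin X (β t) - yE))
    (K k : ℝ) (hk0 : 0 ≤ k) (hKk : k < K)
    (i₀ j₀ : Fin n) (vs vs' : EuclideanSpace ℝ (Fin d))
    (hvs : vs ∈ A) (hvs' : vs' ∈ A)
    (hi₀c : y i₀ = 1) (hi₀s : s i₀ = vs)
    (hj₀c : y j₀ = 1) (hj₀s : s j₀ = vs')
    (hmaj : ((Finset.univ.filter fun i => y i = 1 ∧ s i = vs).card : ℝ) -
        ((Finset.univ.filter fun i => y i = -1 ∧ s i = vs).card : ℝ) ≥ K - k)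
    (hmin : ((Finset.univ.filter fun i => y i = 1 ∧ s i = vs').card : ℝ) -
        ((Finset.univ.filter fun i => y i = -1 ∧ s i = vs').card : ℝ) ≤ -(K - k)) :
    ∀ t : ℕ,
      ⟪x i₀, β t⟫ - ⟪x j₀, β t⟫ ≥
        (η * t / n) *
            ((K - k) * (‖vs‖ ^ 2 + ‖vs'‖ ^ 2) +
              ⟪vs - vs', ∑ i, y i • ξ i⟫ +
              ⟪ξ i₀ - ξ j₀, toEuclideanLin Xᵀ yE⟫) -
          (‖x i₀‖ + ‖x j₀‖) * (η / n) ^ 2 * ‖toEuclideanCLM (𝕜 := ℝ) (Xᵀ * X)‖ *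
            ‖toEuclideanLin Xᵀ yE‖ * (t * (t - 1) / 2) := by
  intro t
  have ha : 0 ≤ η / (n : ℝ) := by positivity
  set T : EuclideanSpace ℝ (Fin d) →L[ℝ] EuclideanSpace ℝ (Fin n) :=
    LinearMap.toContinuousLinearMap (toEuclideanLin X) with hT
  have hadj : ∀ w, ContinuousLinearMap.adjoint T w = toEuclideanLin Xᵀ w := by
    intro w
    have h := Matrix.toEuclideanLin_conjTranspose_eq_adjoint X
    rw [Matrix.conjTranspose_eq_transpose_of_trivial] at h
    rw [h]
    rfl
  have hM : toEuclideanCLM (𝕜 := ℝ) (Xᵀ * X) = (ContinuousLinearMap.adjoint T).comp T := by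
    ext1 w
    rw [ContinuousLinearMap.comp_apply, hadj]
    have h : toEuclideanCLM (𝕜 := ℝ) (Xᵀ * X) w = WithLp.toLp 2 ((Xᵀ * X) *ᵥ w.ofLp) := rfl
    rw [h, ← Matrix.mulVec_mulVec]
    rfl
  have hb : toEuclideanLin Xᵀ yE = ∑ i, y i • x i := by
    ext l
    simp [hX, hyE, Matrix.toLpLin_apply, Matrix.mulVec, dotProduct, mul_comm]
  rw [hM] at hstep ⊢
  set b := toEuclideanLin Xᵀ yE with hbdef
  have hrec' : ∀ t, β (t + 1) =
      (β t - (η / n) • ContinuousLinearMap.adjoint T (T (β t))) + (η / (n : ℝ)) • b := by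
    intro t
    rw [hrec, hadj, map_sub, smul_sub, hbdef]
    simp only [hT, LinearMap.coe_toContinuousLinearMap']
    abel
  have hdev := norm_gd_sub_linear_le ha hstep h0 hrec' t
  have hmain : (K - k) * (‖vs‖ ^ 2 + ‖vs'‖ ^ 2) + ⟪vs - vs', ∑ i, y i • ξ i⟫ +
      ⟪ξ i₀ - ξ j₀, b⟫ ≤ ⟪x i₀ - x j₀, b⟫ := by
    have hdiff : x i₀ - x j₀ = (vs - vs') + (ξ i₀ - ξ j₀) := by
      rw [hx, hx, hi₀c, hj₀c, hi₀s, hj₀s]; abel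
    have h1 := inner_spurious_sum hy hs hx horth_cs horth_ss hvs
    have h2 := inner_spurious_sum hy hs hx horth_cs horth_ss hvs'
    rw [← hb] at h1 h2
    rw [hdiff, inner_add_left, inner_sub_left vs vs' b, inner_sub_left vs vs', h1, h2]
    have h3 := mul_le_mul_of_nonneg_right hmaj (sq_nonneg ‖vs‖)
    have h4 := mul_le_mul_of_nonneg_right hmin (sq_nonneg ‖vs'‖)
    linarith
  have hsplit : ⟪x i₀, β t⟫ - ⟪x j₀, β t⟫ =
      (η / n * t) * ⟪x i₀ - x j₀, b⟫ + ⟪x i₀ - x j₀, β t - (η / n * t) • b⟫ := by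
    rw [← inner_sub_left, inner_sub_right, inner_smul_right]; ring
  have herr : -((‖x i₀‖ + ‖x j₀‖) * ‖β t - (η / n * t) • b‖) ≤
      ⟪x i₀ - x j₀, β t - (η / n * t) • b⟫ := by
    have h1 := neg_le_of_abs_le (abs_real_inner_le_norm (x i₀ - x j₀) (β t - (η / n * t) • b))
    have h2 := mul_le_mul_of_nonneg_right (norm_sub_le (x i₀) (x j₀))
      (norm_nonneg (β t - (η / n * t) • b))
    linarith
  have hlin := mul_le_mul_of_nonneg_left hmain (mul_nonneg ha (Nat.cast_nonneg t))
  have hquad := mul_le_mul_of_nonneg_left hdev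
    (add_nonneg (norm_nonneg (x i₀)) (norm_nonneg (x j₀)))
  rw [hsplit, mul_div_right_comm]
  linarith
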